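/- Gauss's constant relation: 2 θ₄(e^{-π})² = Γ(1/4)/(Γ(1/2) Γ(3/4)); equivalently θ₄(e^{-π})² = Γ(1/4)/(2 Γ(1/2) Γ(3/4)). -/

import Mathlib

noncomputable section

/-- Theta-null `θ₂(q) = ∑_{k∈ℤ} q^{(k+1/2)²}`. -/
def theta2 (q : ℝ) : ℝ := ∑' k : ℤ, q ^ (((k : ℝ) + 1/2)^2)

/-- Theta-null `θ₃(q) = ∑_{k∈ℤ} q^{k²}`. -/
def theta3 (q : ℝ) : ℝ := ∑' k : ℤ, q ^ (k^2)

/-- Theta-null `θ₄(q) = ∑_{k∈ℤ} (-1)^k q^{k²}`. -/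
def theta4 (q : ℝ) : ℝ := ∑' k : ℤ, (-1 : ℝ) ^ k * q ^ (k^2)

/-- Jacobi theta function `θ₃(z,q) = ∑_{k∈ℤ} q^{k²} e^{2πikz}` (real-valued for real z, q∈(0,1)). -/
def jTheta3 (z q : ℝ) : ℝ :=
  (∑' k : ℤ, (q : ℂ) ^ (k^2) * Complex.exp (2 * Real.pi * Complex.I * k * z)).re

/-- Jacobi theta function as a complex number. -/
def jTheta3C (z q : ℝ) : ℂ :=
  ∑' k : ℤ, (q : ℂ) ^ (k^2) * Complex.exp (2 * Real.pi * Complex.I * k * z)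

/-- Gauss hypergeometric series `₂F₁(a,b;c;x)`. -/
def hyp2F1 (a b c x : ℝ) : ℝ :=
  ∑' n : ℕ, ((ascPochhammer ℝ n).eval a * (ascPochhammer ℝ n).eval b /
    (ascPochhammer ℝ n).eval c) * x ^ n / (n.factorial : ℝ)

/-- Borwein cubic theta function `a(q)`. -/
def borA (q : ℝ) : ℝ := ∑' p : ℤ × ℤ, q ^ (p.1^2 + p.1 * p.2 + p.2^2)

/-- Borwein cubic theta function `b(q)` (real-valued). -/
def borB (q : ℝ) : ℝ :=
  (∑' p : ℤ × ℤ, (q : ℂ) ^ (p.1^2 + p.1 * p.2 + p.2^2) *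
    Complex.exp (2 * Real.pi * Complex.I * (((p.1 : ℝ) - (p.2 : ℝ)) / 3))).re

/-- Borwein cubic theta function `c(q)`. -/
def borC (q : ℝ) : ℝ :=
  ∑' p : ℤ × ℤ, q ^ ((((p.1 : ℝ)) + 1/3)^2 + ((p.1 : ℝ) + 1/3) * ((p.2 : ℝ) + 1/3) +
    (((p.2 : ℝ)) + 1/3)^2)

/-- Periodized Gaussian (heat kernel) on the torus ℝ²/(Sℤ²). -/
def heatK (S : Matrix.SpecialLinearGroup (Fin 2) ℝ) (t : ℝ) (z : Fin 2 → ℝ) : ℝ :=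
  (1/t) * ∑' l : Fin 2 → ℤ,
    Real.exp (-(Real.pi / t) *
      (((S : Matrix (Fin 2) (Fin 2) ℝ).mulVec (fun i => (l i : ℝ) + z i) 0)^2 +
       ((S : Matrix (Fin 2) (Fin 2) ℝ).mulVec (fun i => (l i : ℝ) + z i) 1)^2))

end

/-!
For `|q| < 1`, summing over the lattice `ℤ²` in the rotated coordinates `(a + b, a - b)` shows that
`θ₃(q²)²` and `θ₄(q²)²` are the arithmetic and geometric means of `θ₃(q)²` and `θ₄(q)²`; since both
theta-nulls tend to `1` as `q → 0`, the arithmetic-geometric mean of `θ₃(q)²` and `θ₄(q)²` is `1`.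
At `q = e^{-π}` the modular relation for `θ₃` gives `θ₃(q)² = √2 θ₄(q)²`, hence
`θ₄(q)² = 1 / agm(√2, 1)`. By the substitution `u = (t - ab/t) / 2`, the integral
`∫ dt / √((t² + a²)(t² + b²))` over `ℝ` does not change when `a` and `b` are replaced by their
means, so it equals `π / agm(a, b)`; for `(a, b) = (√2, 1)` it is twice the lemniscate integral
`∫₀¹ dx / √(1 - x⁴)`, which is a Beta integral.
-/

open MeasureTheory Set Filter Topology
open scoped NNReal

/-! ### Theta-nulls and the arithmetic-geometric mean -/

theorem zpow_sq_eq_pow_natAbs_sq {G : Type*} [DivInvMonoid G] (x : G) (k : ℤ) :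
    x ^ (k ^ 2) = x ^ (k.natAbs ^ 2) := by
  rw [← zpow_natCast, Nat.cast_pow, Int.natAbs_sq]

theorem neg_zpow_sq {R : Type*} [DivisionRing R] (x : R) (k : ℤ) :
    (-x) ^ (k ^ 2) = (-1) ^ k * x ^ (k ^ 2) := by
  rcases Int.even_or_odd k with hk | hk
  · rw [hk.neg_one_zpow, one_mul, (hk.pow_of_ne_zero two_ne_zero).neg_zpow]
  · rw [hk.neg_one_zpow, neg_one_mul, hk.pow.neg_zpow]

theorem zpow_add_sq_mul_zpow_sub_sq {G : Type*} [CommGroupWithZero G] (x : G) (a b : ℤ) :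
    x ^ ((a + b) ^ 2) * x ^ ((a - b) ^ 2) = (x ^ 2) ^ (a ^ 2) * (x ^ 2) ^ (b ^ 2) := by
  simp only [zpow_sq_eq_pow_natAbs_sq, ← pow_mul, ← pow_add]
  congr 1
  zify
  simp only [sq_abs]
  ring

theorem hasSum_comp_add_sub_iff {M : Type*} [AddCommMonoid M] [TopologicalSpace M]
    {f : ℤ × ℤ → M} {s : M} (hf : ∀ m n, Odd (m + n) → f (m, n) = 0) :
    HasSum (fun p : ℤ × ℤ => f (p.1 + p.2, p.1 - p.2)) s ↔ HasSum f s := by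
  refine Function.Injective.hasSum_iff (g := fun p : ℤ × ℤ => (p.1 + p.2, p.1 - p.2)) ?_ ?_
  · rintro ⟨a, b⟩ ⟨c, d⟩ h
    simp only [Prod.mk.injEq] at h ⊢
    lia
  · rintro ⟨m, n⟩ hmn
    refine hf m n (Int.not_even_iff_odd.1 fun ⟨a, ha⟩ => hmn ⟨(a, m - a), ?_⟩)
    simp only [Prod.mk.injEq]
    lia

section Theta

variable {q r : ℝ}

theorem summable_zpow_sq (hq : |q| < 1) : Summable fun k : ℤ => q ^ (k ^ 2) := by
  have hnat : Summable fun n : ℕ => q ^ (n ^ 2) :=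
    (summable_geometric_of_abs_lt_one hq).comp_injective (Nat.pow_left_injective two_ne_zero)
  simp only [zpow_sq_eq_pow_natAbs_sq]
  exact Summable.of_nat_of_neg (by simpa using hnat) (by simpa using hnat)

theorem theta4_eq_theta3_neg (q : ℝ) : theta4 q = theta3 (-q) :=
  tsum_congr fun k => (neg_zpow_sq q k).symm

theorem hasSum_theta3_mul_theta3 (hq : |q| < 1) (hr : |r| < 1) :
    HasSum (fun p : ℤ × ℤ => q ^ (p.1 ^ 2) * r ^ (p.2 ^ 2)) (theta3 q * theta3 r) := by
  have hq' := (summable_zpow_sq hq).norm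
  have hr' := (summable_zpow_sq hr).norm
  rw [theta3, theta3, tsum_mul_tsum_of_summable_norm hq' hr']
  exact (summable_mul_of_summable_norm hq' hr').hasSum

theorem theta3_sq_add_theta4_sq (hq : |q| < 1) :
    theta3 q ^ 2 + theta4 q ^ 2 = 2 * theta3 (q ^ 2) ^ 2 := by
  have hq' : |-q| < 1 := by rwa [abs_neg]
  have hq2 : |q ^ 2| < 1 := by rw [abs_pow]; exact pow_lt_one₀ (abs_nonneg q) hq two_ne_zero
  have hsum := (hasSum_theta3_mul_theta3 hq hq).add (hasSum_theta3_mul_theta3 hq' hq')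
  rw [← hasSum_comp_add_sub_iff] at hsum
  · rw [theta4_eq_theta3_neg, sq, sq, sq (theta3 (q ^ 2))]
    refine hsum.unique (((hasSum_theta3_mul_theta3 hq2 hq2).mul_left 2).congr_fun fun ⟨a, b⟩ => ?_)
    simp only [zpow_add_sq_mul_zpow_sub_sq, neg_sq, two_mul]
  · intro m n hmn
    have hsign : (-1 : ℝ) ^ m * (-1) ^ n = -1 := by
      rw [← zpow_add₀ (by norm_num), hmn.neg_one_zpow]
    rw [neg_zpow_sq, neg_zpow_sq]
    linear_combination q ^ (m ^ 2) * q ^ (n ^ 2) * hsign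

theorem theta3_mul_theta4 (hq : |q| < 1) : theta3 q * theta4 q = theta4 (q ^ 2) ^ 2 := by
  have hq' : |-q| < 1 := by rwa [abs_neg]
  have hq2 : |-q ^ 2| < 1 := by
    rw [abs_neg, abs_pow]; exact pow_lt_one₀ (abs_nonneg q) hq two_ne_zero
  have hsum := (hasSum_theta3_mul_theta3 hq hq').add (hasSum_theta3_mul_theta3 hq' hq)
  rw [← hasSum_comp_add_sub_iff] at hsum
  · suffices theta3 q * theta3 (-q) + theta3 (-q) * theta3 q
        = 2 * (theta3 (-q ^ 2) * theta3 (-q ^ 2)) by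
      rw [theta4_eq_theta3_neg, theta4_eq_theta3_neg]
      linarith
    refine hsum.unique (((hasSum_theta3_mul_theta3 hq2 hq2).mul_left 2).congr_fun fun ⟨a, b⟩ => ?_)
    have hadd : (-1 : ℝ) ^ (a + b) = (-1) ^ a * (-1) ^ b := zpow_add₀ (by norm_num) a b
    have hsub : (-1 : ℝ) ^ (a - b) = (-1) ^ a * (-1) ^ b := by
      rw [zpow_sub₀ (by norm_num), div_eq_mul_inv, ← inv_zpow, inv_neg_one]
    simp only [neg_zpow_sq, hadd, hsub]
    linear_combination 2 * (-1) ^ a * (-1) ^ b * zpow_add_sq_mul_zpow_sub_sq q a b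
  · intro m n hmn
    have hsign : (-1 : ℝ) ^ m + (-1) ^ n = 0 := by
      rcases Int.even_or_odd m with hm | hm
      · rw [hm.neg_one_zpow, (Int.odd_add'.1 hmn |>.2 hm).neg_one_zpow, add_neg_cancel]
      · rw [hm.neg_one_zpow, (Int.odd_add.1 hmn |>.1 hm).neg_one_zpow, neg_add_cancel]
    rw [neg_zpow_sq, neg_zpow_sq]
    linear_combination q ^ (m ^ 2) * q ^ (n ^ 2) * hsign

theorem theta3_zero : theta3 0 = 1 := by
  rw [theta3, tsum_eq_single 0 fun k hk => zero_zpow _ (pow_ne_zero 2 hk)]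
  simp

theorem continuousAt_theta3 (hq : |q| < 1) : ContinuousAt theta3 q := by
  obtain ⟨r, hqr, hr⟩ := exists_between hq
  have hr0 : 0 < r := (abs_nonneg q).trans_lt hqr
  refine tendsto_tsum_of_dominated_convergence
    (summable_zpow_sq (abs_lt.2 ⟨by linarith, hr⟩)) (fun k => ?_) ?_
  · simp only [zpow_sq_eq_pow_natAbs_sq]
    exact (continuous_pow _).continuousAt
  · filter_upwards [continuous_abs.continuousAt.eventually_lt_const hqr] with x hx k
    rw [zpow_sq_eq_pow_natAbs_sq, zpow_sq_eq_pow_natAbs_sq, norm_pow]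
    exact pow_le_pow_left₀ (norm_nonneg x) hx.le _

theorem tendsto_theta3_nhds_zero : Tendsto theta3 (𝓝 0) (𝓝 1) := by
  simpa only [ContinuousAt, theta3_zero] using continuousAt_theta3 (q := 0) (by simp)

theorem tendsto_theta4_nhds_zero : Tendsto theta4 (𝓝 0) (𝓝 1) := by
  rw [funext theta4_eq_theta3_neg]
  exact tendsto_theta3_nhds_zero.comp (by simpa using (continuous_neg (G := ℝ)).tendsto 0)

theorem agm_nnnorm_theta_sq_comp_sq (hq : |q| < 1) :
    NNReal.agm (‖theta3 (q ^ 2)‖₊ ^ 2) (‖theta4 (q ^ 2)‖₊ ^ 2) =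
      NNReal.agm (‖theta3 q‖₊ ^ 2) (‖theta4 q‖₊ ^ 2) := by
  have hgm : NNReal.sqrt (‖theta3 q‖₊ ^ 2 * ‖theta4 q‖₊ ^ 2) = ‖theta4 (q ^ 2)‖₊ ^ 2 := by
    rw [← mul_pow, ← nnnorm_mul, NNReal.sqrt_sq, theta3_mul_theta4 hq, nnnorm_pow]
  have ham : (‖theta3 q‖₊ ^ 2 + ‖theta4 q‖₊ ^ 2) / 2 = ‖theta3 (q ^ 2)‖₊ ^ 2 := by
    rw [← NNReal.coe_inj]
    push_cast [coe_nnnorm, Real.norm_eq_abs, sq_abs]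
    linarith [theta3_sq_add_theta4_sq hq]
  rw [NNReal.agm_eq_agm_gm_am (x := ‖theta3 q‖₊ ^ 2), hgm, ham, NNReal.agm_comm]

theorem agm_nnnorm_theta_sq (hq : |q| < 1) :
    NNReal.agm (‖theta3 q‖₊ ^ 2) (‖theta4 q‖₊ ^ 2) = 1 := by
  have hiter (n : ℕ) : NNReal.agm (‖theta3 (q ^ 2 ^ n)‖₊ ^ 2) (‖theta4 (q ^ 2 ^ n)‖₊ ^ 2) =
      NNReal.agm (‖theta3 q‖₊ ^ 2) (‖theta4 q‖₊ ^ 2) := by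
    induction n with
    | zero => rw [pow_zero, pow_one]
    | succ n ih =>
      have hqn : |q ^ 2 ^ n| < 1 := by
        rw [abs_pow]; exact pow_lt_one₀ (abs_nonneg q) hq (by positivity)
      rw [pow_succ 2 n, pow_mul, agm_nnnorm_theta_sq_comp_sq hqn, ih]
  have hpow : Tendsto (fun n : ℕ => q ^ 2 ^ n) atTop (𝓝 0) :=
    (tendsto_pow_atTop_nhds_zero_of_abs_lt_one hq).comp
      (tendsto_pow_atTop_atTop_of_one_lt one_lt_two)
  have h3 : Tendsto (fun n : ℕ => ‖theta3 (q ^ 2 ^ n)‖₊ ^ 2) atTop (𝓝 1) := by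
    simpa using (tendsto_theta3_nhds_zero.comp hpow).nnnorm.pow 2
  have h4 : Tendsto (fun n : ℕ => ‖theta4 (q ^ 2 ^ n)‖₊ ^ 2) atTop (𝓝 1) := by
    simpa using (tendsto_theta4_nhds_zero.comp hpow).nnnorm.pow 2
  refine tendsto_nhds_unique (tendsto_const_nhds (f := atTop (α := ℕ)))
    (tendsto_of_tendsto_of_tendsto_of_le_of_le (by simpa using h3.min h4) (by simpa using h3.max h4)
      (fun n => ?_) (fun n => ?_))
  · rw [← hiter n]; exact NNReal.min_le_agm
  · rw [← hiter n]; exact NNReal.agm_le_max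

end Theta

theorem theta3_exp_eq_tsum (x : ℝ) : theta3 (Real.exp x) = ∑' n : ℤ, Real.exp (x * (n : ℝ) ^ 2) :=
  tsum_congr fun n => by rw [← Real.rpow_intCast, ← Real.exp_mul, Int.cast_pow]

theorem theta3_exp_neg_pi_mul {t : ℝ} (ht : 0 < t) :
    theta3 (Real.exp (-Real.pi * t)) = (√t)⁻¹ * theta3 (Real.exp (-Real.pi / t)) := by
  rw [theta3_exp_eq_tsum, theta3_exp_eq_tsum, Real.tsum_exp_neg_mul_int_sq ht, ← Real.sqrt_eq_rpow,
    one_div]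

theorem abs_exp_lt_one {x : ℝ} (hx : x < 0) : |Real.exp x| < 1 := by
  rwa [Real.abs_exp, Real.exp_lt_one_iff]

theorem theta3_exp_neg_pi_sq : theta3 (Real.exp (-Real.pi)) ^ 2
    = √2 * theta4 (Real.exp (-Real.pi)) ^ 2 := by
  set q := Real.exp (-Real.pi) with hq_def
  set r := Real.exp (-Real.pi / 2) with hr_def
  have hq : |q| < 1 := abs_exp_lt_one (by linarith [Real.pi_pos])
  have hr : |r| < 1 := abs_exp_lt_one (by linarith [Real.pi_pos])
  have hrq : r ^ 2 = q := by rw [hr_def, ← Real.exp_nat_mul]; congr 1; push_cast; ring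
  have hmod : 2 * theta3 (q ^ 2) ^ 2 = theta3 r ^ 2 := by
    have hq2 : q ^ 2 = Real.exp (-Real.pi * 2) := by
      rw [hq_def, ← Real.exp_nat_mul]; congr 1; push_cast; ring
    rw [hq2, theta3_exp_neg_pi_mul two_pos, mul_pow, inv_pow, Real.sq_sqrt zero_le_two,
      mul_inv_cancel_left₀ two_ne_zero]
  have hsum : theta3 r ^ 2 + theta4 r ^ 2 = 2 * theta3 q ^ 2 := hrq ▸ theta3_sq_add_theta4_sq hr
  have hdiff : theta3 r ^ 2 = theta3 q ^ 2 + theta4 q ^ 2 := by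
    rw [theta3_sq_add_theta4_sq hq, hmod]
  have hprod : theta3 r * theta4 r = theta4 q ^ 2 := hrq ▸ theta3_mul_theta4 hr
  have hsq : (theta3 q ^ 2) ^ 2 = 2 * (theta4 q ^ 2) ^ 2 := by
    have hfactor : (theta4 q ^ 2) ^ 2 =
        (theta3 q ^ 2 + theta4 q ^ 2) * (theta3 q ^ 2 - theta4 q ^ 2) := by
      linear_combination (theta3 q ^ 2 + theta4 q ^ 2) * (hsum - hdiff) + theta4 r ^ 2 * hdiff
        - (theta3 r * theta4 r + theta4 q ^ 2) * hprod
    linarith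
  rw [← Real.sqrt_sq (sq_nonneg (theta3 q)), hsq, Real.sqrt_mul zero_le_two,
    Real.sqrt_sq (sq_nonneg _)]

/-! ### The complete elliptic integral -/

theorem injOn_sub_div_Ioi {p : ℝ} (hp : 0 < p) : InjOn (fun t : ℝ => t - p / t) (Ioi 0) := by
  refine StrictMonoOn.injOn fun x hx y _ hxy => ?_
  exact sub_lt_sub hxy (div_lt_div_of_pos_left hp hx hxy)

theorem image_sub_div_Ioi {p : ℝ} (hp : 0 < p) : (fun t : ℝ => t - p / t) '' Ioi 0 = univ := by
  refine eq_univ_of_forall fun u => ?_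
  have hsq : √(u ^ 2 + 4 * p) ^ 2 = u ^ 2 + 4 * p := Real.sq_sqrt (by positivity)
  have hpos : 0 < u + √(u ^ 2 + 4 * p) := by
    have habs : |u| < √(u ^ 2 + 4 * p) := Real.lt_sqrt_of_sq_lt (by rw [sq_abs]; linarith)
    linarith [neg_abs_le u]
  refine ⟨(u + √(u ^ 2 + 4 * p)) / 2, half_pos hpos, ?_⟩
  dsimp only
  field_simp
  linear_combination hsq

theorem integral_one_add_div_sq_smul_comp_sub_div_Ioi {E : Type*} [NormedAddCommGroup E]
    [NormedSpace ℝ E] {p : ℝ} (hp : 0 < p) (f : ℝ → E) :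
    ∫ t in Ioi (0 : ℝ), (1 + p / t ^ 2) • f (t - p / t) = ∫ u, f u := by
  have hderiv (t : ℝ) (ht : t ∈ Ioi 0) :
      HasDerivWithinAt (fun t : ℝ => t - p / t) (1 + p / t ^ 2) (Ioi 0) t := by
    have ht0 : t ≠ 0 := ne_of_gt ht
    convert! ((hasDerivAt_id t).sub ((hasDerivAt_inv ht0).const_mul p)).hasDerivWithinAt using 1
    ring
  rw [← setIntegral_univ (f := f), ← image_sub_div_Ioi hp,
    integral_image_eq_integral_abs_deriv_smul measurableSet_Ioi hderiv (injOn_sub_div_Ioi hp)]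
  exact setIntegral_congr_fun measurableSet_Ioi fun t ht => by
    rw [abs_of_pos (by have : 0 < t := ht; positivity)]

/-- The complete elliptic integral `∫ dt / √((t² + a²)(t² + b²))`, taken over the whole real line so
that it equals `π / agm a b` for positive `a` and `b`. -/
noncomputable def agmIntegral (a b : ℝ) : ℝ := ∫ t : ℝ, (√((t ^ 2 + a ^ 2) * (t ^ 2 + b ^ 2)))⁻¹

section AgmIntegral

variable {a b : ℝ}

theorem agmIntegral_eq_two_mul_integral_Ioi (a b : ℝ) :
    agmIntegral a b = 2 * ∫ t in Ioi (0 : ℝ), (√((t ^ 2 + a ^ 2) * (t ^ 2 + b ^ 2)))⁻¹ := by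
  rw [← integral_comp_abs]
  simp only [sq_abs, agmIntegral]

theorem agmIntegral_sqrt_mul_half_add (ha : 0 < a) (hb : 0 < b) :
    agmIntegral √(a * b) ((a + b) / 2) = agmIntegral a b := by
  have hab : 0 < a * b := mul_pos ha hb
  have hscale := Measure.integral_comp_div
    (fun u => (√((u ^ 2 + √(a * b) ^ 2) * (u ^ 2 + ((a + b) / 2) ^ 2)))⁻¹) 2
  rw [abs_two, smul_eq_mul, ← integral_one_add_div_sq_smul_comp_sub_div_Ioi hab] at hscale
  rw [agmIntegral, agmIntegral_eq_two_mul_integral_Ioi, ← mul_right_inj' two_ne_zero, ← hscale,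
    ← mul_assoc, ← integral_const_mul]
  refine setIntegral_congr_fun measurableSet_Ioi fun t ht => ?_
  have ht : 0 < t := ht
  have hfactor : (((t - a * b / t) / 2) ^ 2 + √(a * b) ^ 2) *
      (((t - a * b / t) / 2) ^ 2 + ((a + b) / 2) ^ 2) =
      ((1 + a * b / t ^ 2) / 4) ^ 2 * ((t ^ 2 + a ^ 2) * (t ^ 2 + b ^ 2)) := by
    rw [Real.sq_sqrt hab.le]
    field_simp
    ring
  rw [hfactor, Real.sqrt_mul (sq_nonneg _), Real.sqrt_sq (by positivity), smul_eq_mul, mul_inv]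
  field_simp
  norm_num

theorem agmIntegral_self (ha : 0 < a) : agmIntegral a a = Real.pi / a := by
  have hscale := Measure.integral_comp_div (fun x : ℝ => (1 + x ^ 2)⁻¹) a
  rw [integral_univ_inv_one_add_sq, abs_of_pos ha, smul_eq_mul] at hscale
  have hcongr : agmIntegral a a = ∫ t : ℝ, (a ^ 2)⁻¹ * (1 + (t / a) ^ 2)⁻¹ := by
    refine integral_congr_ae (ae_of_all _ fun t => ?_)
    dsimp only
    rw [Real.sqrt_mul_self (by positivity)]
    field_simp
    ring
  rw [hcongr, integral_const_mul, hscale]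
  field_simp

theorem integrable_inv_sqrt_sq_add_sq_mul (ha : 0 < a) (hb : 0 < b) :
    Integrable fun t : ℝ => (√((t ^ 2 + a ^ 2) * (t ^ 2 + b ^ 2)))⁻¹ := by
  wlog hab : a ≤ b generalizing a b
  · simpa only [mul_comm] using this hb ha (le_of_not_ge hab)
  have hcomp := (integrable_inv_one_add_sq.comp_div ha.ne').const_mul (a ^ 2)⁻¹
  refine hcomp.mono' (by fun_prop) (ae_of_all _ fun t => ?_)
  have hle : t ^ 2 + a ^ 2 ≤ √((t ^ 2 + a ^ 2) * (t ^ 2 + b ^ 2)) := by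
    refine Real.le_sqrt_of_sq_le ?_
    rw [sq (t ^ 2 + a ^ 2)]
    gcongr
  calc ‖(√((t ^ 2 + a ^ 2) * (t ^ 2 + b ^ 2)))⁻¹‖ ≤ (t ^ 2 + a ^ 2)⁻¹ := by
        rw [Real.norm_of_nonneg (by positivity)]
        exact inv_anti₀ (by positivity) hle
    _ = (a ^ 2)⁻¹ * (1 + (t / a) ^ 2)⁻¹ := by
        field_simp
        ring

theorem agmIntegral_anti {a' b' : ℝ} (ha : 0 < a) (hb : 0 < b) (haa' : a ≤ a') (hbb' : b ≤ b') :
    agmIntegral a' b' ≤ agmIntegral a b := by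
  refine integral_mono_of_nonneg (ae_of_all _ fun t => by positivity)
    (integrable_inv_sqrt_sq_add_sq_mul ha hb) (ae_of_all _ fun t => ?_)
  dsimp only
  gcongr

theorem agmIntegral_agmSequences {x y : ℝ≥0} (hx : 0 < x) (hy : 0 < y) (n : ℕ) :
    agmIntegral (NNReal.agmSequences x y n).1 (NNReal.agmSequences x y n).2 = agmIntegral x y := by
  have hstep {x y : ℝ≥0} (hx : 0 < x) (hy : 0 < y) :
      agmIntegral (NNReal.sqrt (x * y)) ((x + y) / 2 : ℝ≥0) = agmIntegral x y := by
    push_cast [Real.coe_sqrt]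
    exact agmIntegral_sqrt_mul_half_add hx hy
  induction n generalizing x y with
  | zero => exact hstep hx hy
  | succ n ih =>
    rw [NNReal.agmSequences_succ, ih (NNReal.sqrt_pos.2 (mul_pos hx hy)) (by positivity),
      hstep hx hy]

theorem agmIntegral_eq_pi_div_agm {x y : ℝ≥0} (hx : 0 < x) (hy : 0 < y) :
    agmIntegral x y = Real.pi / NNReal.agm x y := by
  have hagm : (NNReal.agm x y : ℝ) ≠ 0 := (NNReal.coe_pos.2 (NNReal.agm_pos hx hy)).ne'
  have hlim {u : ℕ → ℝ≥0} (hu : Tendsto u atTop (𝓝 (NNReal.agm x y))) :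
      Tendsto (fun n => Real.pi / (u n : ℝ)) atTop (𝓝 (Real.pi / NNReal.agm x y)) :=
    tendsto_const_nhds.div (NNReal.tendsto_coe.2 hu) hagm
  have hfst (n : ℕ) : 0 < (NNReal.agmSequences x y n).1 := by
    refine lt_of_lt_of_le ?_ (NNReal.agmSequences_fst_monotone n.zero_le)
    exact NNReal.sqrt_pos.2 (mul_pos hx hy)
  have hle (n : ℕ) : (NNReal.agmSequences x y n).1 ≤ (NNReal.agmSequences x y n).2 :=
    NNReal.agmSequences_fst_le_snd n n
  refine tendsto_nhds_unique tendsto_const_nhds (tendsto_of_tendsto_of_tendsto_of_le_of_le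
    (hlim NNReal.tendsto_agmSequences_snd_agm) (hlim NNReal.tendsto_agmSequences_fst_agm)
    (fun n => ?_) (fun n => ?_))
  · dsimp only
    rw [← agmIntegral_self (NNReal.coe_pos.2 ((hfst n).trans_le (hle n))),
      ← agmIntegral_agmSequences hx hy n]
    exact agmIntegral_anti (hfst n) ((hfst n).trans_le (hle n)) (hle n) le_rfl
  · dsimp only
    rw [← agmIntegral_self (NNReal.coe_pos.2 (hfst n)), ← agmIntegral_agmSequences hx hy n]
    exact agmIntegral_anti (hfst n) (hfst n) le_rfl (hle n)

end AgmIntegral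

/-! ### The lemniscate integral -/

theorem integral_rpow_mul_one_sub_rpow {u v : ℝ} (hu : 0 < u) (hv : 0 < v) :
    ∫ x in Ioo (0 : ℝ) 1, x ^ (u - 1) * (1 - x) ^ (v - 1) = ProbabilityTheory.beta u v := by
  rw [ProbabilityTheory.beta_eq_betaIntegralReal u v hu hv, Complex.betaIntegral,
    intervalIntegral.integral_of_le zero_le_one, ← integral_Ioc_eq_integral_Ioo,
    ← Complex.ofReal_re (∫ x in Ioc (0 : ℝ) 1, _), ← integral_complex_ofReal]
  congr 1
  refine setIntegral_congr_fun measurableSet_Ioc fun x hx => ?_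
  simp only [Complex.ofReal_mul, Complex.ofReal_cpow hx.1.le,
    Complex.ofReal_cpow (sub_nonneg.2 hx.2), Complex.ofReal_sub, Complex.ofReal_one]

theorem integral_comp_rpow_Ioo_zero_one {E : Type*} [NormedAddCommGroup E] [NormedSpace ℝ E]
    {p : ℝ} (hp : 0 < p) (f : ℝ → E) :
    ∫ x in Ioo (0 : ℝ) 1, (p * x ^ (p - 1)) • f (x ^ p) = ∫ y in Ioo (0 : ℝ) 1, f y := by
  rw [← Ioi_inter_Iio, ← setIntegral_indicator (f := f) measurableSet_Iio,
    ← integral_comp_rpow_Ioi_of_pos hp, ← setIntegral_indicator measurableSet_Iio]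
  refine setIntegral_congr_fun measurableSet_Ioi fun x hx => ?_
  have hx : 0 < x := hx
  have hmem : x ^ p < 1 ↔ x < 1 := Real.rpow_lt_one_iff' hx.le hp
  by_cases h : x < 1
  · simp only [indicator, mem_Iio, hmem, h, if_true]
  · simp only [indicator, mem_Iio, hmem, h, if_false, smul_zero]

theorem integral_rpow_mul_one_sub_rpow_rpow {p u v : ℝ} (hp : 0 < p) (hu : 0 < u) (hv : 0 < v) :
    ∫ x in Ioo (0 : ℝ) 1, x ^ (p * u - 1) * (1 - x ^ p) ^ (v - 1) =
      ProbabilityTheory.beta u v / p := by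
  rw [← integral_rpow_mul_one_sub_rpow hu hv,
    ← integral_comp_rpow_Ioo_zero_one hp fun y => y ^ (u - 1) * (1 - y) ^ (v - 1),
    eq_div_iff hp.ne', mul_comm _ p, ← integral_const_mul]
  refine setIntegral_congr_fun measurableSet_Ioo fun x hx => ?_
  have hpow : x ^ (p * u - 1) = x ^ (p - 1) * (x ^ p) ^ (u - 1) := by
    rw [← Real.rpow_mul hx.1.le, ← Real.rpow_add hx.1]
    congr 1
    ring
  simp only [hpow, smul_eq_mul, mul_assoc]

theorem injOn_inv_sqrt_one_add_sq : InjOn (fun t : ℝ => (√(1 + t ^ 2))⁻¹) (Ioi 0) := by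
  refine StrictAntiOn.injOn fun x hx y _ hxy => ?_
  have hx : 0 < x := hx
  gcongr

theorem image_inv_sqrt_one_add_sq : (fun t : ℝ => (√(1 + t ^ 2))⁻¹) '' Ioi 0 = Ioo 0 1 := by
  ext x
  constructor
  · rintro ⟨t, ht, rfl⟩
    have ht : 0 < t := ht
    refine ⟨by positivity, inv_lt_one_of_one_lt₀ ?_⟩
    rw [Real.lt_sqrt zero_le_one]
    nlinarith
  · rintro ⟨hx0, hx1⟩
    have hpos : 0 < (x ^ 2)⁻¹ - 1 :=
      sub_pos.2 ((one_lt_inv₀ (by positivity)).2 (pow_lt_one₀ hx0.le hx1 two_ne_zero))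
    refine ⟨√((x ^ 2)⁻¹ - 1), Real.sqrt_pos.2 hpos, ?_⟩
    dsimp only
    rw [Real.sq_sqrt hpos.le, add_sub_cancel, Real.sqrt_inv, Real.sqrt_sq hx0.le, inv_inv]

theorem integral_comp_inv_sqrt_one_add_sq {E : Type*} [NormedAddCommGroup E] [NormedSpace ℝ E]
    (f : ℝ → E) :
    ∫ t in Ioi (0 : ℝ), (t / √(1 + t ^ 2) ^ 3) • f (√(1 + t ^ 2))⁻¹ =
      ∫ x in Ioo (0 : ℝ) 1, f x := by
  have hderiv (t : ℝ) (_ : t ∈ Ioi 0) : HasDerivWithinAt (fun t : ℝ => (√(1 + t ^ 2))⁻¹)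
      (-(t / √(1 + t ^ 2) ^ 3)) (Ioi 0) t := by
    have hpos : 0 < 1 + t ^ 2 := by positivity
    have hsqrt := ((hasDerivAt_pow 2 t).const_add 1).sqrt hpos.ne'
    refine ((hsqrt.inv (Real.sqrt_pos.2 hpos).ne').congr_deriv ?_).hasDerivWithinAt
    field_simp
    norm_num
  rw [← image_inv_sqrt_one_add_sq, integral_image_eq_integral_abs_deriv_smul measurableSet_Ioi
    hderiv injOn_inv_sqrt_one_add_sq]
  refine setIntegral_congr_fun measurableSet_Ioi fun t ht => ?_
  have ht : 0 < t := ht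
  rw [abs_neg, abs_of_pos (by positivity)]

theorem agmIntegral_sqrt_two_one_eq_integral :
    agmIntegral √2 1 = 2 * ∫ x in Ioo (0 : ℝ) 1, (√(1 - x ^ 4))⁻¹ := by
  rw [agmIntegral_eq_two_mul_integral_Ioi, ← integral_comp_inv_sqrt_one_add_sq]
  congr 1
  refine setIntegral_congr_fun measurableSet_Ioi fun t ht => ?_
  have ht : 0 < t := ht
  have hsq : √(1 + t ^ 2) ^ 2 = 1 + t ^ 2 := Real.sq_sqrt (by positivity)
  have hquartic : 1 - (√(1 + t ^ 2))⁻¹ ^ 4 = (t / (1 + t ^ 2)) ^ 2 * (t ^ 2 + 2) := by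
    rw [inv_pow, pow_mul _ 2 2, hsq]
    field_simp
    ring
  rw [hquartic, Real.sqrt_mul (sq_nonneg _), Real.sqrt_sq (by positivity), Real.sq_sqrt zero_le_two,
    Real.sqrt_mul (by positivity), one_pow, add_comm (t ^ 2) 1, smul_eq_mul]
  field_simp
  rw [hsq]

theorem integral_inv_sqrt_one_sub_pow_four : ∫ x in Ioo (0 : ℝ) 1, (√(1 - x ^ 4))⁻¹ =
    Real.Gamma (1 / 4) * Real.Gamma (1 / 2) / (4 * Real.Gamma (3 / 4)) := by
  have hbeta := integral_rpow_mul_one_sub_rpow_rpow (p := 4) (u := 1 / 4) (v := 1 / 2)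
    (by norm_num) (by norm_num) (by norm_num)
  have hsum : (1 / 4 + 1 / 2 : ℝ) = 3 / 4 := by norm_num
  rw [ProbabilityTheory.beta, hsum, div_div, mul_comm _ (4 : ℝ)] at hbeta
  rw [← hbeta]
  refine setIntegral_congr_fun measurableSet_Ioo fun x hx => ?_
  have hnonneg : 0 ≤ 1 - x ^ 4 := sub_nonneg.2 (pow_le_one₀ hx.1.le hx.2.le)
  norm_num [Real.sqrt_eq_rpow, ← Real.rpow_neg hnonneg]

theorem agm_sqrt_two_one : (NNReal.agm (NNReal.sqrt 2) 1 : ℝ) =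
    2 * Real.Gamma (1 / 2) * Real.Gamma (3 / 4) / Real.Gamma (1 / 4) := by
  have hgauss := agmIntegral_eq_pi_div_agm (NNReal.sqrt_pos.2 two_pos) one_pos
  have hagm := NNReal.coe_pos.2 (NNReal.agm_pos (NNReal.sqrt_pos.2 two_pos) one_pos)
  have hpi : Real.Gamma (1 / 2) ^ 2 = Real.pi := by
    rw [Real.Gamma_one_half_eq, Real.sq_sqrt Real.pi_pos.le]
  have hGamma {s : ℝ} (hs : 0 < s) : Real.Gamma s ≠ 0 := (Real.Gamma_pos_of_pos hs).ne'
  push_cast at hgauss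
  rw [agmIntegral_sqrt_two_one_eq_integral, integral_inv_sqrt_one_sub_pow_four, ← hpi] at hgauss
  field_simp [hagm.ne', hGamma] at hgauss ⊢
  linear_combination hgauss / 2

theorem theta4_exp_neg_pi_sq_mul_agm :
    theta4 (Real.exp (-Real.pi)) ^ 2 * NNReal.agm (NNReal.sqrt 2) 1 = 1 := by
  have hratio : ‖theta3 (Real.exp (-Real.pi))‖₊ ^ 2
      = ‖theta4 (Real.exp (-Real.pi))‖₊ ^ 2 * NNReal.sqrt 2 := by
    rw [← nnnorm_pow, theta3_exp_neg_pi_sq, nnnorm_mul, nnnorm_pow, mul_comm, ← NNReal.coe_inj]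
    simp
  have hagm : ‖theta4 (Real.exp (-Real.pi))‖₊ ^ 2 * NNReal.agm (NNReal.sqrt 2) 1 = 1 := by
    rw [← NNReal.agm_mul_distrib, mul_one, ← hratio]
    exact agm_nnnorm_theta_sq (abs_exp_lt_one (neg_neg_of_pos Real.pi_pos))
  simpa using congrArg NNReal.toReal hagm

theorem gauss_constant_relation :
    2 * theta4 (Real.exp (-Real.pi)) ^ 2 =
        Real.Gamma (1/4) / (Real.Gamma (1/2) * Real.Gamma (3/4)) ∧
    theta4 (Real.exp (-Real.pi)) ^ 2 =
        Real.Gamma (1/4) / (2 * Real.Gamma (1/2) * Real.Gamma (3/4)) := by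
  have htheta : theta4 (Real.exp (-Real.pi)) ^ 2 =
      Real.Gamma (1 / 4) / (2 * Real.Gamma (1 / 2) * Real.Gamma (3 / 4)) := by
    rw [eq_inv_of_mul_eq_one_left theta4_exp_neg_pi_sq_mul_agm, agm_sqrt_two_one, inv_div]
  refine ⟨?_, htheta⟩
  rw [htheta, mul_assoc 2, ← div_div, mul_div_assoc']
  ring
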